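/- arXiv:2105.14366 — 8 statements merged into one kernel-verified Lean document; each statement's English description precedes it below -/
import Mathlib

section
/- (Theorem 3.4(i), sufficient optimality for weakly robust efficient solutions.) Suppose z̄ ∈ F satisfies the robust KKT condition (with respect to the subdifferential data S, T) and the pair (f,g) is type I pseudo convex at z̄ (with respect to S, T). Then z̄ is a weakly robust efficient solution, i.e., for every z ∈ F one has f(z) − f(z̄) ∉ −int K. -/
/-!
Theorem 3.4(i): sufficient optimality condition for weakly robust efficient
solutions of an uncertain multiobjective optimization problem, under the
robust KKT condition and type I pseudo convexity of `(f, g)` at `zbar`.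

`Z`, `Y` are real normed spaces; `Z*` is modeled by `WeakDual ℝ Z` (the dual
with the weak* topology), `Y*` by `Y →L[ℝ] ℝ`.  `K ⊆ Y` is a pointed convex
cone, `g i : Z → 𝒰 → ℝ` are the uncertain constraints, `S` and `T` are the
subdifferential data.
-/

theorem sufficient_optimality_weakly_robust_efficient
    {Z Y : Type*} [NormedAddCommGroup Z] [NormedSpace ℝ Z]
    [NormedAddCommGroup Y] [NormedSpace ℝ Y]
    (K : Set Y) (hKconvex : Convex ℝ K)
    (hKcone : ∀ (c : ℝ), 0 < c → ∀ y ∈ K, c • y ∈ K)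
    (hKpointed : K ∩ (-K) = {0})
    {𝒰 : Type*} [Nonempty 𝒰]
    (n : ℕ) (hn : 0 < n)
    (g : Fin n → Z → 𝒰 → ℝ)
    (f : Z → Y)
    -- subdifferential data
    (S : Z → (Y →L[ℝ] ℝ) → Set (WeakDual ℝ Z))
    (T : Fin n → Z → 𝒰 → Set (WeakDual ℝ Z))
    -- the reference point, robust feasible
    (zbar : Z) (hzbarF : ∀ i : Fin n, ∀ u : 𝒰, g i zbar u ≤ 0)
    -- robust KKT condition at zbar
    (y' : Y →L[ℝ] ℝ) (hy'K : ∀ k ∈ K, 0 ≤ y' k) (hy'0 : y' ≠ 0)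
    (μ : Fin n → ℝ) (hμ : ∀ i, 0 ≤ μ i)
    (v' : WeakDual ℝ Z) (hv' : v' ∈ S zbar y')
    (u' : Fin n → WeakDual ℝ Z)
    (hu' : ∀ i, u' i ∈
      closure (convexHull ℝ (⋃ u ∈ {u : 𝒰 | ∀ u', g i zbar u' ≤ g i zbar u}, T i zbar u)))
    (ubar : Fin n → 𝒰) (hubar : ∀ i, ∀ u', g i zbar u' ≤ g i zbar (ubar i))
    (hKKT : (0 : WeakDual ℝ Z) = v' + ∑ i, μ i • u' i)
    (hcomp : ∀ i, μ i * g i zbar (ubar i) = 0)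
    -- (f, g) is type I pseudo convex at zbar
    (hpcI_a : ∀ z : Z, ∀ w : Y →L[ℝ] ℝ, (∀ k ∈ K, 0 ≤ w k) →
      w (f z) < w (f zbar) → ∀ v ∈ S zbar w, v (z - zbar) < 0)
    (hpcI_b : ∀ z : Z, ∀ u : 𝒰, ∀ i : Fin n, g i z u ≤ g i zbar u →
      ∀ w ∈ T i zbar u, w (z - zbar) ≤ 0) :
    -- zbar is a weakly robust efficient solution
    ∀ z : Z, (∀ i : Fin n, ∀ u : 𝒰, g i z u ≤ 0) →
      f z - f zbar ∉ -interior K := by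
  intro z hz hmem
  have hk : -(f z - f zbar) ∈ interior K := hmem
  have hpos : 0 < y' (-(f z - f zbar)) := by
    obtain ⟨d, hd⟩ : ∃ d, 0 < y' d := by
      by_contra! h
      apply hy'0
      ext d
      have h1 := h d
      have h2 := h (-d)
      rw [map_neg] at h2
      simp only [ContinuousLinearMap.zero_apply]
      linarith
    have hc : Filter.Tendsto (fun t : ℝ => -(f z - f zbar) - t • d)
        (nhdsWithin 0 (Set.Ioi 0)) (nhds (-(f z - f zbar))) := by
      have : Continuous (fun t : ℝ => -(f z - f zbar) - t • d) := by fun_prop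
      have h := this.tendsto 0
      simp only [zero_smul, sub_zero] at h
      exact h.mono_left nhdsWithin_le_nhds
    have he := hc.eventually (mem_interior_iff_mem_nhds.mp hk)
    obtain ⟨t, htK, ht⟩ := (he.and self_mem_nhdsWithin).exists
    have h1 := hy'K _ htK
    rw [map_sub, map_smul, smul_eq_mul] at h1
    have h2 : 0 < t * y' d := mul_pos ht hd
    linarith
  have hv : v' (z - zbar) < 0 := by
    apply hpcI_a z y' hy'K _ v' hv'
    rw [map_neg, map_sub] at hpos
    linarith
  have hterm : ∀ i, μ i * u' i (z - zbar) ≤ 0 := by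
    intro i
    rcases (hμ i).eq_or_lt with h0 | h0
    · rw [← h0, zero_mul]
    · have hg : g i zbar (ubar i) = 0 := by
        rcases mul_eq_zero.mp (hcomp i) with h | h
        · exact absurd h h0.ne'
        · exact h
      have hclosed : IsClosed {w : WeakDual ℝ Z | w (z - zbar) ≤ 0} :=
        isClosed_le (WeakDual.eval_continuous (z - zbar)) continuous_const
      have hconv : Convex ℝ {w : WeakDual ℝ Z | w (z - zbar) ≤ 0} := by
        intro a ha b hb s t hs ht _
        have ha' : a (z - zbar) ≤ 0 := ha
        have hb' : b (z - zbar) ≤ 0 := hb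
        change s * a (z - zbar) + t * b (z - zbar) ≤ 0
        nlinarith [mul_nonneg hs (neg_nonneg.mpr ha'), mul_nonneg ht (neg_nonneg.mpr hb')]
      have hsub : (⋃ u ∈ {u : 𝒰 | ∀ u', g i zbar u' ≤ g i zbar u}, T i zbar u) ⊆
          {w : WeakDual ℝ Z | w (z - zbar) ≤ 0} := by
        intro w hw
        simp only [Set.mem_iUnion] at hw
        obtain ⟨u, hu, hw⟩ := hw
        have h1 : g i zbar (ubar i) ≤ g i zbar u := hu (ubar i)
        have h2 := hz i u
        exact hpcI_b z u i (by linarith) w hw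
      have h3 : u' i (z - zbar) ≤ 0 :=
        closure_minimal (convexHull_min hsub hconv) hclosed (hu' i)
      exact mul_nonpos_of_nonneg_of_nonpos h0.le h3
  let ev : WeakDual ℝ Z →+ ℝ :=
    { toFun := fun w => w (z - zbar), map_zero' := rfl, map_add' := fun _ _ => rfl }
  have hsum : ev (∑ i, μ i • u' i) ≤ 0 := by
    rw [map_sum]
    exact Finset.sum_nonpos fun i _ => hterm i
  have h0 : ev 0 = ev v' + ev (∑ i, μ i • u' i) := by
    rw [← map_add, ← hKKT]
  rw [map_zero] at h0
  have hv2 : ev v' < 0 := hv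
  linarith
end

section
/- (Theorem 3.4(ii), sufficient optimality for robust efficient solutions.) Suppose z̄ ∈ F satisfies the robust KKT condition (with respect to the subdifferential data S, T) and the pair (f,g) is type II pseudo convex at z̄ (with respect to S, T). Then z̄ is a robust efficient solution, i.e., for every z ∈ F one has f(z) − f(z̄) ∉ −(K \ {0}). -/
/-!
Theorem 3.4(ii): sufficient optimality condition for robust efficient\nsolutions, under the robust KKT condition and type II pseudo convexity of\n`(f, g)` at `zbar`.

`Z`, `Y` are real normed spaces; `Z*` is modeled by `WeakDual ℝ Z` (the dual
with the weak* topology), `Y*` by `Y →L[ℝ] ℝ`.  `K ⊆ Y` is a pointed convex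
cone, `g i : Z → 𝒰 → ℝ` are the uncertain constraints, `S` and `T` are the
subdifferential data.
-/

theorem sufficient_optimality_robust_efficient
    {Z Y : Type*} [NormedAddCommGroup Z] [NormedSpace ℝ Z]
    [NormedAddCommGroup Y] [NormedSpace ℝ Y]
    (K : Set Y) (hKconvex : Convex ℝ K)
    (hKcone : ∀ (c : ℝ), 0 < c → ∀ y ∈ K, c • y ∈ K)
    (hKpointed : K ∩ (-K) = {0})
    {𝒰 : Type*} [Nonempty 𝒰]
    (n : ℕ) (hn : 0 < n)
    (g : Fin n → Z → 𝒰 → ℝ)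
    (f : Z → Y)
    -- subdifferential data
    (S : Z → (Y →L[ℝ] ℝ) → Set (WeakDual ℝ Z))
    (T : Fin n → Z → 𝒰 → Set (WeakDual ℝ Z))
    -- the reference point, robust feasible
    (zbar : Z) (hzbarF : ∀ i : Fin n, ∀ u : 𝒰, g i zbar u ≤ 0)
    -- robust KKT condition at zbar
    (y' : Y →L[ℝ] ℝ) (hy'K : ∀ k ∈ K, 0 ≤ y' k) (hy'0 : y' ≠ 0)
    (μ : Fin n → ℝ) (hμ : ∀ i, 0 ≤ μ i)
    (v' : WeakDual ℝ Z) (hv' : v' ∈ S zbar y')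
    (u' : Fin n → WeakDual ℝ Z)
    (hu' : ∀ i, u' i ∈
      closure (convexHull ℝ (⋃ u ∈ {u : 𝒰 | ∀ u', g i zbar u' ≤ g i zbar u}, T i zbar u)))
    (ubar : Fin n → 𝒰) (hubar : ∀ i, ∀ u', g i zbar u' ≤ g i zbar (ubar i))
    (hKKT : (0 : WeakDual ℝ Z) = v' + ∑ i, μ i • u' i)
    (hcomp : ∀ i, μ i * g i zbar (ubar i) = 0)
    -- (f, g) is type II pseudo convex at zbar
    (hpcII_a : ∀ z : Z, z ≠ zbar → ∀ w : Y →L[ℝ] ℝ, (∀ k ∈ K, 0 ≤ w k) → w ≠ 0 →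
      w (f z) ≤ w (f zbar) → ∀ v ∈ S zbar w, v (z - zbar) < 0)
    (hpcII_b : ∀ z : Z, ∀ u : 𝒰, ∀ i : Fin n, g i z u ≤ g i zbar u →
      ∀ w ∈ T i zbar u, w (z - zbar) ≤ 0)
 :
    -- zbar is a robust efficient solution
    ∀ z : Z, (∀ i : Fin n, ∀ u : 𝒰, g i z u ≤ 0) →
      f z - f zbar ∉ -(K \ {0}) := by
  intro z hz hmem
  have hmem' : -(f z - f zbar) ∈ K \ {0} := hmem
  have hne : z ≠ zbar := by
    rintro rfl
    exact hmem'.2 (by simp)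
  have h1 : y' (f z) ≤ y' (f zbar) := by
    have := hy'K _ hmem'.1
    simp only [neg_sub, map_sub] at this
    linarith
  have h2 := hpcII_a z hne y' hy'K hy'0 h1 v' hv'
  have h3 : ∀ i, μ i * u' i (z - zbar) ≤ 0 := by
    intro i
    rcases (hμ i).eq_or_lt with h | h
    · simp [← h]
    · have h0 : g i zbar (ubar i) = 0 := by
        rcases mul_eq_zero.1 (hcomp i) with h' | h'
        · exact absurd h' h.ne'
        · exact h'
      refine mul_nonpos_of_nonneg_of_nonpos h.le ?_
      have hcl : IsClosed {w : WeakDual ℝ Z | w (z - zbar) ≤ 0} :=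
        isClosed_le (WeakDual.eval_continuous _) continuous_const
      have hcv : Convex ℝ {w : WeakDual ℝ Z | w (z - zbar) ≤ 0} := by
        intro a ha b hb s t hs ht _
        change s * a (z - zbar) + t * b (z - zbar) ≤ 0
        have e1 := mul_nonpos_of_nonneg_of_nonpos hs ha
        have e2 := mul_nonpos_of_nonneg_of_nonpos ht hb
        linarith
      refine closure_minimal (convexHull_min ?_ hcv) hcl (hu' i)
      intro w hw
      simp only [Set.mem_iUnion, Set.mem_setOf_eq] at hw
      obtain ⟨u, hu, hw⟩ := hw
      exact hpcII_b z u i ((hz i u).trans (h0 ▸ hu (ubar i))) w hw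
  have h4 : (0 : ℝ) = v' (z - zbar) + ∑ i, μ i * u' i (z - zbar) := by
    let L : WeakDual ℝ Z →+ ℝ :=
      { toFun := fun w => w (z - zbar), map_zero' := rfl, map_add' := fun _ _ => rfl }
    have h := congrArg L hKKT
    rw [map_zero, map_add, map_sum] at h
    exact h
  have h5 := Finset.sum_nonpos (fun i (_ : i ∈ Finset.univ) => h3 i)
  linarith
end

section
/- (Theorem 3.6, sufficient optimality for properly robust efficient solutions.) Suppose (f,g) is type I pseudo convex at z̄ ∈ F (with respect to the subdifferential data S, T), and suppose the robust KKT condition holds at z̄ with a multiplier y* that moreover belongs to the interior of K⁺ in the norm topology of Y*. Then y*(f(z) − f(z̄)) ≥ 0 for all z ∈ F; in particular z̄ is a properly robust efficient solution. -/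
/-!
Theorem 3.6: sufficient optimality condition for properly robust efficient\nsolutions, under the robust KKT condition with a multiplier in the interior\nof the dual cone and type I pseudo convexity of `(f, g)` at `zbar`.

`Z`, `Y` are real normed spaces; `Z*` is modeled by `WeakDual ℝ Z` (the dual
with the weak* topology), `Y*` by `Y →L[ℝ] ℝ`.  `K ⊆ Y` is a pointed convex
cone, `g i : Z → 𝒰 → ℝ` are the uncertain constraints, `S` and `T` are the
subdifferential data.
-/

theorem sufficient_optimality_properly_robust_efficient
    {Z Y : Type*} [NormedAddCommGroup Z] [NormedSpace ℝ Z]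
    [NormedAddCommGroup Y] [NormedSpace ℝ Y]
    (K : Set Y) (hKconvex : Convex ℝ K)
    (hKcone : ∀ (c : ℝ), 0 < c → ∀ y ∈ K, c • y ∈ K)
    (hKpointed : K ∩ (-K) = {0})
    {𝒰 : Type*} [Nonempty 𝒰]
    (n : ℕ) (hn : 0 < n)
    (g : Fin n → Z → 𝒰 → ℝ)
    (f : Z → Y)
    -- subdifferential data
    (S : Z → (Y →L[ℝ] ℝ) → Set (WeakDual ℝ Z))
    (T : Fin n → Z → 𝒰 → Set (WeakDual ℝ Z))
    -- the reference point, robust feasible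
    (zbar : Z) (hzbarF : ∀ i : Fin n, ∀ u : 𝒰, g i zbar u ≤ 0)
    -- robust KKT condition at zbar
    (y' : Y →L[ℝ] ℝ) (hy'K : ∀ k ∈ K, 0 ≤ y' k) (hy'0 : y' ≠ 0)
    (μ : Fin n → ℝ) (hμ : ∀ i, 0 ≤ μ i)
    (v' : WeakDual ℝ Z) (hv' : v' ∈ S zbar y')
    (u' : Fin n → WeakDual ℝ Z)
    (hu' : ∀ i, u' i ∈
      closure (convexHull ℝ (⋃ u ∈ {u : 𝒰 | ∀ u', g i zbar u' ≤ g i zbar u}, T i zbar u)))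
    (ubar : Fin n → 𝒰) (hubar : ∀ i, ∀ u', g i zbar u' ≤ g i zbar (ubar i))
    (hKKT : (0 : WeakDual ℝ Z) = v' + ∑ i, μ i • u' i)
    (hcomp : ∀ i, μ i * g i zbar (ubar i) = 0)
    -- the multiplier lies in the norm-interior of the dual cone K⁺
    (hy'int : y' ∈ interior {w : Y →L[ℝ] ℝ | ∀ k ∈ K, 0 ≤ w k})
    -- (f, g) is type I pseudo convex at zbar
    (hpcI_a : ∀ z : Z, ∀ w : Y →L[ℝ] ℝ, (∀ k ∈ K, 0 ≤ w k) →
      w (f z) < w (f zbar) → ∀ v ∈ S zbar w, v (z - zbar) < 0)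
    (hpcI_b : ∀ z : Z, ∀ u : 𝒰, ∀ i : Fin n, g i z u ≤ g i zbar u →
      ∀ w ∈ T i zbar u, w (z - zbar) ≤ 0)
 :
    -- y' (f z - f zbar) ≥ 0 on F; in particular zbar is properly robust efficient
    (∀ z : Z, (∀ i : Fin n, ∀ u : 𝒰, g i z u ≤ 0) → 0 ≤ y' (f z - f zbar)) ∧
    (∃ w ∈ interior {w : Y →L[ℝ] ℝ | ∀ k ∈ K, 0 ≤ w k},
      ∀ z : Z, (∀ i : Fin n, ∀ u : 𝒰, g i z u ≤ 0) → 0 ≤ w (f z - f zbar)) := by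
  have main : ∀ z : Z, (∀ i : Fin n, ∀ u : 𝒰, g i z u ≤ 0) → 0 ≤ y' (f z - f zbar) := by
    intro z hz
    by_contra hneg
    rw [map_sub] at hneg
    have hv := hpcI_a z y' hy'K (by linarith) v' hv'
    have hterm : ∀ i, μ i * (u' i) (z - zbar) ≤ 0 := by
      intro i
      rcases (hμ i).eq_or_lt with h0 | hpos
      · rw [← h0, zero_mul]
      have hg0 : g i zbar (ubar i) = 0 := by
        rcases mul_eq_zero.mp (hcomp i) with h | h
        · exact absurd h hpos.ne'
        · exact h
      have hclosed : IsClosed {w : WeakDual ℝ Z | w (z - zbar) ≤ 0} :=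
        isClosed_le (WeakDual.eval_continuous (z - zbar)) continuous_const
      have hconv : Convex ℝ {w : WeakDual ℝ Z | w (z - zbar) ≤ 0} := by
        intro a ha b hb s t hs ht _
        have ha' : a (z - zbar) ≤ 0 := ha
        have hb' : b (z - zbar) ≤ 0 := hb
        change s * a (z - zbar) + t * b (z - zbar) ≤ 0
        nlinarith [mul_nonneg hs (neg_nonneg.mpr ha'), mul_nonneg ht (neg_nonneg.mpr hb')]
      have hsub := closure_minimal (convexHull_min (s := ⋃ u ∈ {u : 𝒰 | ∀ u', g i zbar u' ≤ g i zbar u}, T i zbar u) (by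
        intro w hw
        simp only [Set.mem_iUnion] at hw
        obtain ⟨u, hu, hw⟩ := hw
        have h1 : g i zbar (ubar i) ≤ g i zbar u := hu (ubar i)
        exact hpcI_b z u i (by linarith [hz i u]) w hw) hconv) hclosed
      have hle : (u' i) (z - zbar) ≤ 0 := hsub (hu' i)
      exact mul_nonpos_of_nonneg_of_nonpos hpos.le hle
    let ev : WeakDual ℝ Z →+ ℝ :=
      { toFun := fun w => w (z - zbar), map_zero' := rfl, map_add' := fun _ _ => rfl }
    have h := congrArg ev hKKT
    rw [map_zero, map_add, map_sum] at h
    have hs : ∑ i, ev (μ i • u' i) ≤ 0 := Finset.sum_nonpos fun i _ => hterm i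
    have hv2 : ev v' < 0 := hv
    linarith
  exact ⟨main, y', hy'int, main⟩
end

section
/- (Theorem 4.1(i), weak duality for the Mond–Weir robust dual.) Let z ∈ F and let (y, y*, μ) be feasible for the Mond–Weir robust dual (with respect to the subdifferential data S, T). If (f,g) is type I pseudo convex at y, then f(z) − f(y) ∉ −int K. -/
/-!
Theorem 4.1(i): weak duality for the Mond-Weir robust dual, under type I\npseudo convexity of `(f, g)` at the dual-feasible point `y`.

`Z`, `Y` are real normed spaces; `Z*` is modeled by `WeakDual ℝ Z` (the dual
with the weak* topology), `Y*` by `Y →L[ℝ] ℝ`.  `K ⊆ Y` is a pointed convex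
cone, `g i : Z → 𝒰 → ℝ` are the uncertain constraints, `S` and `T` are the
subdifferential data.
-/

theorem weak_duality_typeI
    {Z Y : Type*} [NormedAddCommGroup Z] [NormedSpace ℝ Z]
    [NormedAddCommGroup Y] [NormedSpace ℝ Y]
    (K : Set Y) (hKconvex : Convex ℝ K)
    (hKcone : ∀ (c : ℝ), 0 < c → ∀ y ∈ K, c • y ∈ K)
    (hKpointed : K ∩ (-K) = {0})
    {𝒰 : Type*} [Nonempty 𝒰]
    (n : ℕ) (hn : 0 < n)
    (g : Fin n → Z → 𝒰 → ℝ)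
    (f : Z → Y)
    -- subdifferential data
    (S : Z → (Y →L[ℝ] ℝ) → Set (WeakDual ℝ Z))
    (T : Fin n → Z → 𝒰 → Set (WeakDual ℝ Z))
    -- a robust feasible point z
    (z : Z) (hzF : ∀ i : Fin n, ∀ u : 𝒰, g i z u ≤ 0)
    (y : Z)
    -- (y, y', μ) is feasible for the Mond-Weir robust dual
    (y' : Y →L[ℝ] ℝ) (hy'K : ∀ k ∈ K, 0 ≤ y' k) (hy'0 : y' ≠ 0)
    (μ : Fin n → ℝ) (hμ : ∀ i, 0 ≤ μ i)
    (v' : WeakDual ℝ Z) (hv' : v' ∈ S y y')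
    (u' : Fin n → WeakDual ℝ Z)
    (hu' : ∀ i, u' i ∈
      closure (convexHull ℝ (⋃ u ∈ {u : 𝒰 | ∀ u', g i y u' ≤ g i y u}, T i y u)))
    (hfeas : (0 : WeakDual ℝ Z) = v' + ∑ i, μ i • u' i)
    (hsign : ∀ i : Fin n, ∀ u : 𝒰, (∀ u', g i y u' ≤ g i y u) → 0 ≤ μ i * g i y u)
    -- (f, g) is type I pseudo convex at y
    (hpcI_a : ∀ z : Z, ∀ w : Y →L[ℝ] ℝ, (∀ k ∈ K, 0 ≤ w k) →
      w (f z) < w (f y) → ∀ v ∈ S y w, v (z - y) < 0)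
    (hpcI_b : ∀ z : Z, ∀ u : 𝒰, ∀ i : Fin n, g i z u ≤ g i y u →
      ∀ w ∈ T i y u, w (z - y) ≤ 0)
 :
    f z - f y ∉ -interior K := by
  intro hmem
  have hk : f y - f z ∈ interior K := by
    have := Set.mem_neg.mp hmem
    simpa using this
  have hpos : 0 < y' (f y - f z) := by
    obtain ⟨e, he⟩ : ∃ e, 0 < y' e := by
      by_contra hcon
      push Not at hcon
      apply hy'0
      ext e
      have h1 := hcon e
      have h2 := hcon (-e)
      rw [map_neg] at h2
      simp only [ContinuousLinearMap.zero_apply]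
      linarith
    have hc : Filter.Tendsto (fun t : ℝ => (f y - f z) - t • e) (nhdsWithin 0 (Set.Ioi 0))
        (nhds (f y - f z)) := by
      have : Continuous (fun t : ℝ => (f y - f z) - t • e) := by fun_prop
      have h0 := this.tendsto 0
      simp only [zero_smul, sub_zero] at h0
      exact h0.mono_left nhdsWithin_le_nhds
    have hev := hc.eventually (mem_interior_iff_mem_nhds.mp hk)
    obtain ⟨t, htK, ht⟩ := (hev.and self_mem_nhdsWithin).exists
    have h3 := hy'K _ htK
    rw [map_sub, map_smul, smul_eq_mul] at h3
    have h4 : 0 < t * y' e := mul_pos ht he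
    linarith
  have hv : v' (z - y) < 0 := by
    refine hpcI_a z y' hy'K ?_ v' hv'
    rw [map_sub] at hpos
    linarith
  have hi : ∀ i, μ i * u' i (z - y) ≤ 0 := by
    intro i
    rcases (hμ i).eq_or_lt with h | h
    · rw [← h, zero_mul]
    · refine mul_nonpos_of_nonneg_of_nonpos h.le ?_
      have hcl : IsClosed {w : WeakDual ℝ Z | w (z - y) ≤ 0} :=
        isClosed_le (WeakDual.eval_continuous (z - y)) continuous_const
      have hcv : Convex ℝ {w : WeakDual ℝ Z | w (z - y) ≤ 0} := by
        intro a ha b hb s t hs ht _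
        have h1 := mul_nonneg_of_nonpos_of_nonpos (neg_nonpos.mpr hs) ha
        have h2 := mul_nonneg_of_nonpos_of_nonpos (neg_nonpos.mpr ht) hb
        change s * a (z - y) + t * b (z - y) ≤ 0
        linarith
      refine closure_minimal (convexHull_min ?_ hcv) hcl (hu' i)
      intro w hw
      simp only [Set.mem_iUnion] at hw
      obtain ⟨u, hu, hw⟩ := hw
      exact hpcI_b z u i ((hzF i u).trans (nonneg_of_mul_nonneg_right (hsign i u hu) h)) w hw
  have hev : ∀ s : Finset (Fin n), (∑ i ∈ s, μ i • u' i : WeakDual ℝ Z) (z - y) ≤ 0 := by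
    intro s
    induction s using Finset.induction_on with
    | empty => rw [Finset.sum_empty]; exact le_refl (0 : ℝ)
    | insert a s ha ih =>
      rw [Finset.sum_insert ha]
      exact add_nonpos (hi a) ih
  have h5 : (0 : ℝ) = v' (z - y) + (∑ i, μ i • u' i : WeakDual ℝ Z) (z - y) :=
    congrArg (fun w : WeakDual ℝ Z => w (z - y)) hfeas
  have h6 := hev Finset.univ
  linarith
end

section
/- (Theorem 4.1(ii), weak duality for the Mond–Weir robust dual.) Let z ∈ F and let (y, y*, μ) be feasible for the Mond–Weir robust dual (with respect to the subdifferential data S, T). If (f,g) is type II pseudo convex at y, then f(z) − f(y) ∉ −(K \ {0}). -/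
/-!
Theorem 4.1(ii): weak duality for the Mond-Weir robust dual, under type II\npseudo convexity of `(f, g)` at the dual-feasible point `y`.

`Z`, `Y` are real normed spaces; `Z*` is modeled by `WeakDual ℝ Z` (the dual
with the weak* topology), `Y*` by `Y →L[ℝ] ℝ`.  `K ⊆ Y` is a pointed convex
cone, `g i : Z → 𝒰 → ℝ` are the uncertain constraints, `S` and `T` are the
subdifferential data.
-/

theorem weak_duality_typeII
    {Z Y : Type*} [NormedAddCommGroup Z] [NormedSpace ℝ Z]
    [NormedAddCommGroup Y] [NormedSpace ℝ Y]
    (K : Set Y) (hKconvex : Convex ℝ K)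
    (hKcone : ∀ (c : ℝ), 0 < c → ∀ y ∈ K, c • y ∈ K)
    (hKpointed : K ∩ (-K) = {0})
    {𝒰 : Type*} [Nonempty 𝒰]
    (n : ℕ) (hn : 0 < n)
    (g : Fin n → Z → 𝒰 → ℝ)
    (f : Z → Y)
    -- subdifferential data
    (S : Z → (Y →L[ℝ] ℝ) → Set (WeakDual ℝ Z))
    (T : Fin n → Z → 𝒰 → Set (WeakDual ℝ Z))
    -- a robust feasible point z
    (z : Z) (hzF : ∀ i : Fin n, ∀ u : 𝒰, g i z u ≤ 0)
    (y : Z)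
    -- (y, y', μ) is feasible for the Mond-Weir robust dual
    (y' : Y →L[ℝ] ℝ) (hy'K : ∀ k ∈ K, 0 ≤ y' k) (hy'0 : y' ≠ 0)
    (μ : Fin n → ℝ) (hμ : ∀ i, 0 ≤ μ i)
    (v' : WeakDual ℝ Z) (hv' : v' ∈ S y y')
    (u' : Fin n → WeakDual ℝ Z)
    (hu' : ∀ i, u' i ∈
      closure (convexHull ℝ (⋃ u ∈ {u : 𝒰 | ∀ u', g i y u' ≤ g i y u}, T i y u)))
    (hfeas : (0 : WeakDual ℝ Z) = v' + ∑ i, μ i • u' i)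
    (hsign : ∀ i : Fin n, ∀ u : 𝒰, (∀ u', g i y u' ≤ g i y u) → 0 ≤ μ i * g i y u)
    -- (f, g) is type II pseudo convex at y
    (hpcII_a : ∀ z : Z, z ≠ y → ∀ w : Y →L[ℝ] ℝ, (∀ k ∈ K, 0 ≤ w k) → w ≠ 0 →
      w (f z) ≤ w (f y) → ∀ v ∈ S y w, v (z - y) < 0)
    (hpcII_b : ∀ z : Z, ∀ u : 𝒰, ∀ i : Fin n, g i z u ≤ g i y u →
      ∀ w ∈ T i y u, w (z - y) ≤ 0)
 :
    f z - f y ∉ -(K \ {0}) := by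
  intro hmem
  rw [Set.mem_neg] at hmem
  obtain ⟨hK, h0⟩ := hmem
  have hne : z ≠ y := by
    rintro rfl
    exact h0 (by simp)
  have hle : y' (f z) ≤ y' (f y) := by
    have h := hy'K _ hK
    rw [map_neg, map_sub] at h
    linarith
  have hv := hpcII_a z hne y' hy'K hy'0 hle v' hv'
  have hterm : ∀ i, μ i * u' i (z - y) ≤ 0 := by
    intro i
    rcases (hμ i).eq_or_lt with h | hpos
    · rw [← h]; simp
    · have hc : IsClosed {w : WeakDual ℝ Z | w (z - y) ≤ 0} :=
        isClosed_le (WeakDual.eval_continuous (z - y)) continuous_const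
      have hconv : Convex ℝ {w : WeakDual ℝ Z | w (z - y) ≤ 0} := by
        intro a ha b hb s t hs ht _
        have h1 : s * a (z - y) ≤ 0 := mul_nonpos_of_nonneg_of_nonpos hs ha
        have h2 : t * b (z - y) ≤ 0 := mul_nonpos_of_nonneg_of_nonpos ht hb
        change s * a (z - y) + t * b (z - y) ≤ 0
        linarith
      have hsub : (⋃ u ∈ {u : 𝒰 | ∀ u', g i y u' ≤ g i y u}, T i y u) ⊆
          {w : WeakDual ℝ Z | w (z - y) ≤ 0} := by
        intro w hw
        simp only [Set.mem_iUnion] at hw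
        obtain ⟨u, hu, hw⟩ := hw
        have hg : 0 ≤ g i y u := nonneg_of_mul_nonneg_right (hsign i u hu) hpos
        exact hpcII_b z u i ((hzF i u).trans hg) w hw
      have : u' i (z - y) ≤ 0 := closure_minimal (convexHull_min hsub hconv) hc (hu' i)
      exact mul_nonpos_of_nonneg_of_nonpos hpos.le this
  let E : WeakDual ℝ Z →ₗ[ℝ] ℝ :=
    { toFun := fun w => w (z - y)
      map_add' := fun _ _ => rfl
      map_smul' := fun _ _ => rfl }
  have hev := congrArg E hfeas
  rw [map_zero, map_add, map_sum] at hev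
  have hs : ∑ i, E (μ i • u' i) ≤ 0 := by
    refine Finset.sum_nonpos fun i _ => ?_
    rw [map_smul]
    exact hterm i
  have hv2 : E v' < 0 := hv
  linarith
end

section
/- (Theorem 4.4(i), converse duality.) Let (z̄, ȳ*, μ̄) be feasible for the Mond–Weir robust dual (with respect to the subdifferential data S, T) and suppose in addition z̄ ∈ F. If (f,g) is type I pseudo convex at z̄, then z̄ is a weakly robust efficient solution, i.e., f(z) − f(z̄) ∉ −int K for every z ∈ F. -/
/-!
Theorem 4.4(i): converse duality.  If `(zbar, y', μ)` is feasible for the\nMond-Weir robust dual, `zbar` is robust feasible, and `(f, g)` is type I\npseudo convex at `zbar`, then `zbar` is weakly robust efficient.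

`Z`, `Y` are real normed spaces; `Z*` is modeled by `WeakDual ℝ Z` (the dual
with the weak* topology), `Y*` by `Y →L[ℝ] ℝ`.  `K ⊆ Y` is a pointed convex
cone, `g i : Z → 𝒰 → ℝ` are the uncertain constraints, `S` and `T` are the
subdifferential data.
-/

theorem converse_duality_typeI
    {Z Y : Type*} [NormedAddCommGroup Z] [NormedSpace ℝ Z]
    [NormedAddCommGroup Y] [NormedSpace ℝ Y]
    (K : Set Y) (hKconvex : Convex ℝ K)
    (hKcone : ∀ (c : ℝ), 0 < c → ∀ y ∈ K, c • y ∈ K)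
    (hKpointed : K ∩ (-K) = {0})
    {𝒰 : Type*} [Nonempty 𝒰]
    (n : ℕ) (hn : 0 < n)
    (g : Fin n → Z → 𝒰 → ℝ)
    (f : Z → Y)
    -- subdifferential data
    (S : Z → (Y →L[ℝ] ℝ) → Set (WeakDual ℝ Z))
    (T : Fin n → Z → 𝒰 → Set (WeakDual ℝ Z))
    -- zbar is robust feasible
    (zbar : Z) (hzbarF : ∀ i : Fin n, ∀ u : 𝒰, g i zbar u ≤ 0)
    -- (zbar, y', μ) is feasible for the Mond-Weir robust dual
    (y' : Y →L[ℝ] ℝ) (hy'K : ∀ k ∈ K, 0 ≤ y' k) (hy'0 : y' ≠ 0)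
    (μ : Fin n → ℝ) (hμ : ∀ i, 0 ≤ μ i)
    (v' : WeakDual ℝ Z) (hv' : v' ∈ S zbar y')
    (u' : Fin n → WeakDual ℝ Z)
    (hu' : ∀ i, u' i ∈
      closure (convexHull ℝ (⋃ u ∈ {u : 𝒰 | ∀ u', g i zbar u' ≤ g i zbar u}, T i zbar u)))
    (hfeas : (0 : WeakDual ℝ Z) = v' + ∑ i, μ i • u' i)
    (hsign : ∀ i : Fin n, ∀ u : 𝒰, (∀ u', g i zbar u' ≤ g i zbar u) → 0 ≤ μ i * g i zbar u)
    -- (f, g) is type I pseudo convex at zbar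
    (hpcI_a : ∀ z : Z, ∀ w : Y →L[ℝ] ℝ, (∀ k ∈ K, 0 ≤ w k) →
      w (f z) < w (f zbar) → ∀ v ∈ S zbar w, v (z - zbar) < 0)
    (hpcI_b : ∀ z : Z, ∀ u : 𝒰, ∀ i : Fin n, g i z u ≤ g i zbar u →
      ∀ w ∈ T i zbar u, w (z - zbar) ≤ 0)
 :
    ∀ z : Z, (∀ i : Fin n, ∀ u : 𝒰, g i z u ≤ 0) →
      f z - f zbar ∉ -interior K := by
  intro z hz hmem
  have hx : -(f z - f zbar) ∈ interior K := hmem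
  -- strict positivity of the multiplier on the interior of the cone
  have hpos : 0 < y' (-(f z - f zbar)) := by
    obtain ⟨d, hd⟩ : ∃ d, y' d < 0 := by
      by_contra hcon
      push Not at hcon
      apply hy'0
      ext d
      have h1 := hcon d
      have h2 := hcon (-d)
      rw [map_neg] at h2
      simp only [ContinuousLinearMap.zero_apply]
      linarith
    have hc : Filter.Tendsto (fun t : ℝ => -(f z - f zbar) + t • d) (nhdsWithin 0 (Set.Ioi 0))
        (nhds (-(f z - f zbar))) := by
      have hcont : Continuous (fun t : ℝ => -(f z - f zbar) + t • d) := by fun_prop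
      have := hcont.tendsto 0
      simp only [zero_smul, add_zero] at this
      exact this.mono_left nhdsWithin_le_nhds
    have hev := hc.eventually (mem_interior_iff_mem_nhds.mp hx)
    obtain ⟨t, htK, ht⟩ := (hev.and self_mem_nhdsWithin).exists
    have ht0 : (0 : ℝ) < t := ht
    have h := hy'K _ htK
    rw [map_add, map_smul, smul_eq_mul] at h
    nlinarith [mul_neg_of_pos_of_neg ht0 hd]
  have hlt : y' (f z) < y' (f zbar) := by
    rw [map_neg, map_sub] at hpos
    linarith
  have hv := hpcI_a z y' hy'K hlt v' hv'
  have hsum : ∀ i, μ i * (u' i) (z - zbar) ≤ 0 := by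
    intro i
    rcases (hμ i).eq_or_lt with h0 | h0
    · simp [← h0]
    · have hle : u' i ∈ {w : WeakDual ℝ Z | w (z - zbar) ≤ 0} := by
        refine closure_minimal (convexHull_min ?_ ?_) ?_ (hu' i)
        · intro w hw
          simp only [Set.mem_iUnion] at hw
          obtain ⟨u, hu, hw⟩ := hw
          have hg : 0 ≤ g i zbar u := nonneg_of_mul_nonneg_right (hsign i u hu) h0
          exact hpcI_b z u i ((hz i u).trans hg) w hw
        · intro a ha b hb s t hs ht _
          change s * a (z - zbar) + t * b (z - zbar) ≤ 0
          have ha' : a (z - zbar) ≤ 0 := ha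
          have hb' : b (z - zbar) ≤ 0 := hb
          nlinarith [mul_nonneg hs (neg_nonneg.mpr ha'), mul_nonneg ht (neg_nonneg.mpr hb')]
        · exact isClosed_le (WeakDual.eval_continuous (z - zbar)) continuous_const
      exact mul_nonpos_of_nonneg_of_nonpos h0.le hle
  let ev : WeakDual ℝ Z →+ ℝ :=
    { toFun := fun w => w (z - zbar), map_zero' := rfl, map_add' := fun _ _ => rfl }
  have h := congrArg ev hfeas
  rw [map_zero, map_add, map_sum] at h
  have h2 : ∑ i, ev (μ i • u' i) ≤ 0 := Finset.sum_nonpos fun i _ => hsum i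
  have h3 : ev v' < 0 := hv
  linarith
end

section
/- (Theorem 4.4(ii), converse duality.) Let (z̄, ȳ*, μ̄) be feasible for the Mond–Weir robust dual (with respect to the subdifferential data S, T) and suppose in addition z̄ ∈ F. If (f,g) is type II pseudo convex at z̄, then z̄ is a robust efficient solution, i.e., f(z) − f(z̄) ∉ −(K \ {0}) for every z ∈ F. -/
/-!
Theorem 4.4(ii): converse duality.  If `(zbar, y', μ)` is feasible for the\nMond-Weir robust dual, `zbar` is robust feasible, and `(f, g)` is type II\npseudo convex at `zbar`, then `zbar` is robust efficient.

`Z`, `Y` are real normed spaces; `Z*` is modeled by `WeakDual ℝ Z` (the dual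
with the weak* topology), `Y*` by `Y →L[ℝ] ℝ`.  `K ⊆ Y` is a pointed convex
cone, `g i : Z → 𝒰 → ℝ` are the uncertain constraints, `S` and `T` are the
subdifferential data.
-/

theorem converse_duality_typeII
    {Z Y : Type*} [NormedAddCommGroup Z] [NormedSpace ℝ Z]
    [NormedAddCommGroup Y] [NormedSpace ℝ Y]
    (K : Set Y) (hKconvex : Convex ℝ K)
    (hKcone : ∀ (c : ℝ), 0 < c → ∀ y ∈ K, c • y ∈ K)
    (hKpointed : K ∩ (-K) = {0})
    {𝒰 : Type*} [Nonempty 𝒰]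
    (n : ℕ) (hn : 0 < n)
    (g : Fin n → Z → 𝒰 → ℝ)
    (f : Z → Y)
    -- subdifferential data
    (S : Z → (Y →L[ℝ] ℝ) → Set (WeakDual ℝ Z))
    (T : Fin n → Z → 𝒰 → Set (WeakDual ℝ Z))
    -- zbar is robust feasible
    (zbar : Z) (hzbarF : ∀ i : Fin n, ∀ u : 𝒰, g i zbar u ≤ 0)
    -- (zbar, y', μ) is feasible for the Mond-Weir robust dual
    (y' : Y →L[ℝ] ℝ) (hy'K : ∀ k ∈ K, 0 ≤ y' k) (hy'0 : y' ≠ 0)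
    (μ : Fin n → ℝ) (hμ : ∀ i, 0 ≤ μ i)
    (v' : WeakDual ℝ Z) (hv' : v' ∈ S zbar y')
    (u' : Fin n → WeakDual ℝ Z)
    (hu' : ∀ i, u' i ∈
      closure (convexHull ℝ (⋃ u ∈ {u : 𝒰 | ∀ u', g i zbar u' ≤ g i zbar u}, T i zbar u)))
    (hfeas : (0 : WeakDual ℝ Z) = v' + ∑ i, μ i • u' i)
    (hsign : ∀ i : Fin n, ∀ u : 𝒰, (∀ u', g i zbar u' ≤ g i zbar u) → 0 ≤ μ i * g i zbar u)
    -- (f, g) is type II pseudo convex at zbar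
    (hpcII_a : ∀ z : Z, z ≠ zbar → ∀ w : Y →L[ℝ] ℝ, (∀ k ∈ K, 0 ≤ w k) → w ≠ 0 →
      w (f z) ≤ w (f zbar) → ∀ v ∈ S zbar w, v (z - zbar) < 0)
    (hpcII_b : ∀ z : Z, ∀ u : 𝒰, ∀ i : Fin n, g i z u ≤ g i zbar u →
      ∀ w ∈ T i zbar u, w (z - zbar) ≤ 0)
 :
    ∀ z : Z, (∀ i : Fin n, ∀ u : 𝒰, g i z u ≤ 0) →
      f z - f zbar ∉ -(K \ {0}) := by
  intro z hz hmem
  have hmem' : -(f z - f zbar) ∈ K \ {0} := hmem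
  have hne : z ≠ zbar := by
    rintro rfl
    exact hmem'.2 (by simp)
  have h1 : y' (f z) ≤ y' (f zbar) := by
    have h := hy'K _ hmem'.1
    simp only [map_neg, map_sub] at h
    linarith
  have h2 := hpcII_a z hne y' hy'K hy'0 h1 v' hv'
  have h3 : ∀ i, μ i * u' i (z - zbar) ≤ 0 := by
    intro i
    rcases (hμ i).eq_or_lt with h0 | h0
    · rw [← h0]; simp
    · refine mul_nonpos_of_nonneg_of_nonpos (hμ i) ?_
      have hcl : IsClosed {w : WeakDual ℝ Z | w (z - zbar) ≤ 0} :=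
        isClosed_le (WeakDual.eval_continuous (z - zbar)) continuous_const
      have hcv : Convex ℝ {w : WeakDual ℝ Z | w (z - zbar) ≤ 0} := by
        intro a ha b hb s t hs ht _
        have ha' : a (z - zbar) ≤ 0 := ha
        have hb' : b (z - zbar) ≤ 0 := hb
        change s * a (z - zbar) + t * b (z - zbar) ≤ 0
        nlinarith [mul_nonneg hs (neg_nonneg.2 ha'), mul_nonneg ht (neg_nonneg.2 hb')]
      refine closure_minimal (convexHull_min ?_ hcv) hcl (hu' i)
      intro w hw
      simp only [Set.mem_iUnion, Set.mem_setOf_eq] at hw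
      obtain ⟨u, hu, hw⟩ := hw
      have hg : 0 ≤ g i zbar u := nonneg_of_mul_nonneg_right (hsign i u hu) h0
      exact hpcII_b z u i ((hz i u).trans hg) w hw
  have h4 : (0 : ℝ) = v' (z - zbar) + ∑ i, μ i * u' i (z - zbar) := by
    let e : WeakDual ℝ Z →ₗ[ℝ] ℝ :=
      { toFun := fun w => w (z - zbar), map_add' := fun _ _ => rfl, map_smul' := fun _ _ => rfl }
    have h := congrArg e hfeas
    rw [map_zero, map_add, map_sum] at h
    simp only [map_smul, smul_eq_mul] at h
    exact h
  have h5 := Finset.sum_nonpos (s := Finset.univ) (fun i _ => h3 i)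
  linarith
end

section
/- (Example 2.3, strict pseudo convexity of f at z̄.) For every z ∈ ℝ² with z ≠ z̄ and every y = (y₁,y₂,y₃) ∈ ℝ³ with nonnegative components and y ≠ 0: if y₁f₁(z) + y₂f₂(z) + y₃f₃(z) ≤ y₁f₁(z̄) + y₂f₂(z̄) + y₃f₃(z̄), then for all v₁ ∈ A₁, v₂ ∈ A₂, v₃ ∈ A₃ one has ⟨y₁v₁ + y₂v₂ + y₃v₃, z − z̄⟩ < 0. -/
/-!
Example 2.3: strict pseudo convexity of `f = (f₁, f₂, f₃)` at
`zbar = (0, -2)`, with respect to the explicit limiting subdifferentials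
`A₁, A₂, A₃`.
-/

noncomputable section Ex23

def dot (v w : ℝ × ℝ) : ℝ := v.1 * w.1 + v.2 * w.2

def zbar : ℝ × ℝ := (0, -2)

def f₁ (z : ℝ × ℝ) : ℝ :=
  (4 / 5) * z.1 ^ 2 + 5 * |z.1| + (4 / 5) * (z.2 + 2) ^ 2 + (2 / 5) * z.2 + 4 / 5
def f₂ (z : ℝ × ℝ) : ℝ :=
  6 * z.1 ^ 2 + (1 / 2) * |z.1| + 6 * (z.2 + 2) ^ 2 + 3 * z.2 + 6
def f₃ (z : ℝ × ℝ) : ℝ :=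
  z.1 ^ 2 + 4 * |z.1| + (z.2 + 2) ^ 2 + (1 / 2) * z.2 + 1

def A₁ : Set (ℝ × ℝ) := Set.Icc (-5) 5 ×ˢ {2 / 5}
def A₂ : Set (ℝ × ℝ) := Set.Icc (-(1 / 2)) (1 / 2) ×ˢ {3}
def A₃ : Set (ℝ × ℝ) := Set.Icc (-4) 4 ×ˢ {1 / 2}

theorem example23_strictly_pseudo_convex
    (z : ℝ × ℝ) (hz : z ≠ zbar)
    (y₁ y₂ y₃ : ℝ) (hy₁ : 0 ≤ y₁) (hy₂ : 0 ≤ y₂) (hy₃ : 0 ≤ y₃)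
    (hy : ¬(y₁ = 0 ∧ y₂ = 0 ∧ y₃ = 0))
    (h : y₁ * f₁ z + y₂ * f₂ z + y₃ * f₃ z ≤
         y₁ * f₁ zbar + y₂ * f₂ zbar + y₃ * f₃ zbar) :
    ∀ v₁ ∈ A₁, ∀ v₂ ∈ A₂, ∀ v₃ ∈ A₃,
      dot (y₁ • v₁ + y₂ • v₂ + y₃ • v₃) (z - zbar) < 0 := by
  obtain ⟨a, b⟩ := z
  rintro ⟨p₁, q₁⟩ h₁ ⟨p₂, q₂⟩ h₂ ⟨p₃, q₃⟩ h₃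
  simp only [A₁, A₂, A₃, Set.mem_prod, Set.mem_Icc, Set.mem_singleton_iff] at h₁ h₂ h₃
  obtain ⟨⟨l₁, u₁⟩, rfl⟩ := h₁
  obtain ⟨⟨l₂, u₂⟩, rfl⟩ := h₂
  obtain ⟨⟨l₃, u₃⟩, rfl⟩ := h₃
  have hq : 0 < a ^ 2 + (b + 2) ^ 2 := by
    by_contra hn
    apply hz
    have ha : a = 0 := by nlinarith [sq_nonneg a, sq_nonneg (b + 2)]
    have hb : b + 2 = 0 := by nlinarith [sq_nonneg a, sq_nonneg (b + 2)]
    simp only [zbar, Prod.mk.injEq]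
    exact ⟨ha, by linarith⟩
  have key : ∀ p c : ℝ, -c ≤ p → p ≤ c → p * a ≤ c * |a| := by
    intro p c hl hu
    calc p * a ≤ |p * a| := le_abs_self _
      _ = |p| * |a| := abs_mul _ _
      _ ≤ c * |a| := mul_le_mul_of_nonneg_right (abs_le.mpr ⟨hl, hu⟩) (abs_nonneg _)
  have k₁ := mul_le_mul_of_nonneg_left (key p₁ 5 l₁ u₁) hy₁
  have k₂ := mul_le_mul_of_nonneg_left (key p₂ (1 / 2) l₂ u₂) hy₂
  have k₃ := mul_le_mul_of_nonneg_left (key p₃ 4 l₃ u₃) hy₃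
  have hs : 0 < 4 / 5 * y₁ + 6 * y₂ + y₃ := by
    by_contra hn
    exact hy ⟨by linarith, by linarith, by linarith⟩
  have hm := mul_pos hs hq
  simp only [f₁, f₂, f₃, zbar, abs_zero] at h
  simp only [dot, zbar, Prod.smul_mk, Prod.mk_add_mk, Prod.mk_sub_mk, smul_eq_mul]
  linarith

end Ex23
end
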